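/- arXiv:1010.2947 — 2 statements merged into one kernel-verified Lean document; each statement's English description precedes it below -/
import Mathlib

section
/- Under the stated hypotheses, for all k, l ∈ ℝ, all m ∈ ℂ with Im m ≤ 0, and all t > 0, the function Q(k,l,m,t) := m·v̂(k,l,m,t) − l·ŵ(k,l,m,t) satisfies the ordinary differential equation ∂²ₜQ + μ(k²+l²+m²)Q = F_Q(k,l,m,t), where F_Q := ( (λ+2μ)l·g̃₃ + iμkl·ũ + iμl²·ṽ ) + m·( −μ·g̃₂ + 2iμl·w̃ ) − i μ m²·ṽ. -/
open MeasureTheory Set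

noncomputable section

/-- Partial derivative of a function of `(x, y, z, t)` in the `i`-th slot. -/
def pd : Fin 4 → (ℝ → ℝ → ℝ → ℝ → ℝ) → (ℝ → ℝ → ℝ → ℝ → ℝ)
  | ⟨0, _⟩, f => fun x y z t => deriv (fun x' => f x' y z t) x
  | ⟨1, _⟩, f => fun x y z t => deriv (fun y' => f x y' z t) y
  | ⟨2, _⟩, f => fun x y z t => deriv (fun z' => f x y z' t) z
  | ⟨3, _⟩, f => fun x y z t => deriv (fun t' => f x y z t') t

/-- Smoothness of a function of `(x, y, z, t)` jointly in its four arguments. -/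
def Smooth4 (f : ℝ → ℝ → ℝ → ℝ → ℝ) : Prop :=
  ContDiff ℝ (⊤ : ℕ∞) fun p : ℝ × ℝ × ℝ × ℝ => f p.1 p.2.1 p.2.2.1 p.2.2.2

/-- `f` decays faster than any power of `1 + |x| + |y| + z` on the half space `z ≥ 0`,
uniformly for `t` in compact time intervals. -/
def Decays (f : ℝ → ℝ → ℝ → ℝ → ℝ) : Prop :=
  ∀ T : ℝ, 0 < T → ∀ n : ℕ, ∃ C : ℝ, ∀ x y z t : ℝ,
    0 ≤ z → 0 ≤ t → t ≤ T → |f x y z t| ≤ C / (1 + |x| + |y| + z) ^ n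

/-- `f` and all its partial derivatives of order at most two decay. -/
def DecaysAll (f : ℝ → ℝ → ℝ → ℝ → ℝ) : Prop :=
  Decays f ∧ (∀ i : Fin 4, Decays (pd i f)) ∧ ∀ i j : Fin 4, Decays (pd i (pd j f))

/-- The three-dimensional Lamé–Navier equations on the half space `z > 0`, `t > 0`
(with unit density). -/
def LameNavier (lam mu : ℝ) (u v w : ℝ → ℝ → ℝ → ℝ → ℝ) : Prop :=
  ∀ x y z t : ℝ, 0 < z → 0 < t →
    ((lam + 2 * mu) * pd 0 (pd 0 u) x y z t
        + (lam + mu) * (pd 0 (pd 1 v) x y z t + pd 0 (pd 2 w) x y z t)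
        + mu * (pd 1 (pd 1 u) x y z t + pd 2 (pd 2 u) x y z t)
      = pd 3 (pd 3 u) x y z t) ∧
    ((lam + 2 * mu) * pd 1 (pd 1 v) x y z t
        + (lam + mu) * (pd 1 (pd 2 w) x y z t + pd 1 (pd 0 u) x y z t)
        + mu * (pd 2 (pd 2 v) x y z t + pd 0 (pd 0 v) x y z t)
      = pd 3 (pd 3 v) x y z t) ∧
    ((lam + 2 * mu) * pd 2 (pd 2 w) x y z t
        + (lam + mu) * (pd 2 (pd 0 u) x y z t + pd 2 (pd 1 v) x y z t)
        + mu * (pd 0 (pd 0 w) x y z t + pd 1 (pd 1 w) x y z t)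
      = pd 3 (pd 3 w) x y z t)

/-- Lamb's stress boundary conditions on the surface `z = 0`. -/
def StressBC (lam mu : ℝ) (u v w : ℝ → ℝ → ℝ → ℝ → ℝ) (g₁ g₂ g₃ : ℝ → ℝ → ℝ → ℝ) : Prop :=
  ∀ x y t : ℝ, 0 < t →
    pd 2 u x y 0 t + pd 0 w x y 0 t = g₁ x y t ∧
    pd 2 v x y 0 t + pd 1 w x y 0 t = g₂ x y t ∧
    pd 2 w x y 0 t + lam / (lam + 2 * mu) * (pd 0 u x y 0 t + pd 1 v x y 0 t) = g₃ x y t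

/-- The half-space Fourier transform `∫∫∫ e^{−ikx−ily−imz} f dz dy dx`, defined for
`k, l ∈ ℝ` and `m` in the closed lower half plane. -/
def FT3 (f : ℝ → ℝ → ℝ → ℝ → ℝ) (k l : ℝ) (m : ℂ) (t : ℝ) : ℂ :=
  ∫ x : ℝ, ∫ y : ℝ, ∫ z in Ici (0 : ℝ),
    Complex.exp (-Complex.I * ((k : ℂ) * x + (l : ℂ) * y) - Complex.I * m * z) * (f x y z t : ℂ)

/-- The boundary Fourier transform `∫∫ e^{−ikx−ily} f(x, y, t) dy dx`. -/
def FT2 (f : ℝ → ℝ → ℝ → ℝ) (k l : ℝ) (t : ℝ) : ℂ :=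
  ∫ x : ℝ, ∫ y : ℝ,
    Complex.exp (-Complex.I * ((k : ℂ) * x + (l : ℂ) * y)) * (f x y t : ℂ)

/-- The forcing `F_P` of the ODE for `P = kû + lv̂ + mŵ`, built from the transforms of the
boundary data `g₁, g₂, g₃` and the boundary values of `u, v, w`. -/
def FP (lam mu : ℝ) (u v w : ℝ → ℝ → ℝ → ℝ → ℝ) (g₁ g₂ g₃ : ℝ → ℝ → ℝ → ℝ)
    (k l : ℝ) (m : ℂ) (t : ℝ) : ℂ :=
  -((mu : ℂ) * (k : ℂ) * FT2 g₁ k l t + (mu : ℂ) * (l : ℂ) * FT2 g₂ k l t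
      + Complex.I * (lam : ℂ) * ((k : ℂ) ^ 2 + (l : ℂ) ^ 2) *
        FT2 (fun x y τ => w x y 0 τ) k l t)
    - m * (2 * Complex.I * (mu : ℂ) * (k : ℂ) * FT2 (fun x y τ => u x y 0 τ) k l t
        + 2 * Complex.I * (mu : ℂ) * (l : ℂ) * FT2 (fun x y τ => v x y 0 τ) k l t
        + ((lam : ℂ) + 2 * (mu : ℂ)) * FT2 g₃ k l t)
    - Complex.I * m ^ 2 * ((lam : ℂ) + 2 * (mu : ℂ)) * FT2 (fun x y τ => w x y 0 τ) k l t

/-- The forcing `F_Q` of the ODE for `Q = mv̂ − lŵ`. -/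
def FQ (lam mu : ℝ) (u v w : ℝ → ℝ → ℝ → ℝ → ℝ) (g₁ g₂ g₃ : ℝ → ℝ → ℝ → ℝ)
    (k l : ℝ) (m : ℂ) (t : ℝ) : ℂ :=
  (((lam : ℂ) + 2 * (mu : ℂ)) * (l : ℂ) * FT2 g₃ k l t
      + Complex.I * (mu : ℂ) * (k : ℂ) * (l : ℂ) * FT2 (fun x y τ => u x y 0 τ) k l t
      + Complex.I * (mu : ℂ) * (l : ℂ) ^ 2 * FT2 (fun x y τ => v x y 0 τ) k l t)
    + m * (-((mu : ℂ)) * FT2 g₂ k l t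
        + 2 * Complex.I * (mu : ℂ) * (l : ℂ) * FT2 (fun x y τ => w x y 0 τ) k l t)
    - Complex.I * (mu : ℂ) * m ^ 2 * FT2 (fun x y τ => v x y 0 τ) k l t

/-- The forcing `F_R` of the ODE for `R = kŵ − mû`. -/
def FR (lam mu : ℝ) (u v w : ℝ → ℝ → ℝ → ℝ → ℝ) (g₁ g₂ g₃ : ℝ → ℝ → ℝ → ℝ)
    (k l : ℝ) (m : ℂ) (t : ℝ) : ℂ :=
  -(((lam : ℂ) + 2 * (mu : ℂ)) * (k : ℂ) * FT2 g₃ k l t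
      + Complex.I * (mu : ℂ) * (k : ℂ) ^ 2 * FT2 (fun x y τ => u x y 0 τ) k l t
      + Complex.I * (mu : ℂ) * (k : ℂ) * (l : ℂ) * FT2 (fun x y τ => v x y 0 τ) k l t)
    + m * ((mu : ℂ) * FT2 g₁ k l t
        - 2 * Complex.I * (mu : ℂ) * (k : ℂ) * FT2 (fun x y τ => w x y 0 τ) k l t)
    + Complex.I * (mu : ℂ) * m ^ 2 * FT2 (fun x y τ => u x y 0 τ) k l t

/-!
Integrating by parts turns a tangential derivative into multiplication by `ik` or `il`, and a
normal derivative into multiplication by `im` minus the transform of the boundary trace. The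
stress conditions express the traces of `v_z` and `w_z` through the data and the tangential
derivatives of `u`, `v`, `w` on the surface. In the transformed second and third equations the
coupling terms are `−(λ+μ)l(kû + lv̂ + mŵ)` and `−(λ+μ)m(kû + lv̂ + mŵ)`; they cancel in
`mv̂ − lŵ`, the symbol of a component of the curl.
-/

section ExponentialTransforms

variable {E : Type*} [NormedAddCommGroup E] [NormedSpace ℂ E] {f f' : ℝ → E} {a : ℂ}

lemma hasDerivAt_cexp_neg_mul_smul {x : ℝ} {v : E} (hf : HasDerivAt f v x) :
    HasDerivAt (fun x : ℝ => Complex.exp (-a * x) • f x)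
      (Complex.exp (-a * x) • v - a • Complex.exp (-a * x) • f x) x := by
  have hexp : HasDerivAt (fun x : ℝ => Complex.exp (-a * x)) (Complex.exp (-a * x) * (-a * 1)) x :=
    (((hasDerivAt_id (x : ℂ)).const_mul (-a)).cexp).comp_ofReal
  refine (hexp.smul hf).congr_deriv ?_
  module

lemma integral_cexp_neg_mul_smul_deriv (hderiv : ∀ x, HasDerivAt f (f' x) x)
    (hf : Integrable fun x : ℝ => Complex.exp (-a * x) • f x)
    (hf' : Integrable fun x : ℝ => Complex.exp (-a * x) • f' x) :
    ∫ x : ℝ, Complex.exp (-a * x) • f' x = a • ∫ x : ℝ, Complex.exp (-a * x) • f x := by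
  have hzero := integral_eq_zero_of_hasDerivAt_of_integrable
    (fun x => hasDerivAt_cexp_neg_mul_smul (a := a) (hderiv x)) (hf'.sub (hf.fun_smul a)) hf
  rwa [integral_sub hf' (hf.fun_smul a), integral_smul, sub_eq_zero] at hzero

lemma integral_Ici_cexp_neg_mul_smul_deriv [CompleteSpace E]
    (hderiv : ∀ x ∈ Ici (0 : ℝ), HasDerivAt f (f' x) x)
    (hf : IntegrableOn (fun x : ℝ => Complex.exp (-a * x) • f x) (Ici 0))
    (hf' : IntegrableOn (fun x : ℝ => Complex.exp (-a * x) • f' x) (Ici 0)) :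
    ∫ x in Ici (0 : ℝ), Complex.exp (-a * x) • f' x
      = a • (∫ x in Ici (0 : ℝ), Complex.exp (-a * x) • f x) - f 0 := by
  have hd := fun x hx => hasDerivAt_cexp_neg_mul_smul (a := a) (hderiv x hx)
  have hint := hf'.sub (Integrable.fun_smul a hf)
  have hlim := tendsto_zero_of_hasDerivAt_of_integrableOn_Ioi
    (fun x hx => hd x (Ioi_subset_Ici_self hx)) (hint.mono_set Ioi_subset_Ici_self)
    (hf.mono_set Ioi_subset_Ici_self)
  have hFTC := integral_Ioi_of_hasDerivAt_of_tendsto' hd (hint.mono_set Ioi_subset_Ici_self) hlim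
  rw [← integral_Ici_eq_integral_Ioi, integral_sub hf' (Integrable.fun_smul a hf),
    integral_smul] at hFTC
  rw [sub_eq_iff_eq_add.mp hFTC]
  simp only [Complex.ofReal_zero, mul_zero, Complex.exp_zero, one_smul]
  abel

end ExponentialTransforms

/-- The plane wave `e^{−ikx−ily}`, the kernel of `FT2`. -/
def planeWave (k l : ℝ) (q : ℝ × ℝ) : ℂ :=
  Complex.exp (-Complex.I * ((k : ℂ) * q.1 + (l : ℂ) * q.2))

/-- The kernel `e^{−ikx−ily−imz}` of `FT3`; a point of the half space is written `((x, y), z)`. -/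
def waveKernel (k l : ℝ) (m : ℂ) (p : (ℝ × ℝ) × ℝ) : ℂ :=
  Complex.exp (-Complex.I * ((k : ℂ) * p.1.1 + (l : ℂ) * p.1.2) - Complex.I * m * p.2)

/-- Lebesgue measure on the half space `z ≥ 0`, as the product of the boundary plane with the
half line of depths. -/
abbrev halfSpaceMeasure : Measure ((ℝ × ℝ) × ℝ) :=
  (volume : Measure (ℝ × ℝ)).prod (volume.restrict (Ici 0))

/-- Integrability over the boundary plane at time `t`. -/
def PlaneIntegrable (g : ℝ → ℝ → ℝ → ℝ) (t : ℝ) : Prop :=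
  Integrable fun q : ℝ × ℝ => g q.1 q.2 t

/-- Integrability over the half space `z ≥ 0` at time `t`. -/
def HalfSpaceIntegrable (f : ℝ → ℝ → ℝ → ℝ → ℝ) (t : ℝ) : Prop :=
  Integrable (fun p : (ℝ × ℝ) × ℝ => f p.1.1 p.1.2 p.2 t) halfSpaceMeasure

/-- The restriction of `f` to the plane at depth `z`; `slice f 0` is the boundary trace. -/
abbrev slice (f : ℝ → ℝ → ℝ → ℝ → ℝ) (z : ℝ) : ℝ → ℝ → ℝ → ℝ :=
  fun x y t => f x y z t

section Kernels

variable (k l : ℝ) (m : ℂ)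

lemma planeWave_eq_mul (x y : ℝ) :
    planeWave k l (x, y)
      = Complex.exp (-(Complex.I * k) * x) * Complex.exp (-(Complex.I * l) * y) := by
  rw [planeWave, ← Complex.exp_add]
  ring_nf

lemma waveKernel_eq_mul (q : ℝ × ℝ) (z : ℝ) :
    waveKernel k l m (q, z) = Complex.exp (-(Complex.I * m) * z) * planeWave k l q := by
  rw [waveKernel, planeWave, ← Complex.exp_add]
  ring_nf

lemma continuous_planeWave : Continuous (planeWave k l) := by
  unfold planeWave
  fun_prop

lemma continuous_waveKernel : Continuous (waveKernel k l m) := by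
  unfold waveKernel
  fun_prop

lemma norm_planeWave (q : ℝ × ℝ) : ‖planeWave k l q‖ = 1 := by
  simp [planeWave, Complex.norm_exp]

variable {m}

lemma norm_waveKernel_le_one (hm : m.im ≤ 0) {p : (ℝ × ℝ) × ℝ} (hp : 0 ≤ p.2) :
    ‖waveKernel k l m p‖ ≤ 1 := by
  rw [waveKernel_eq_mul k l m p.1 p.2, norm_mul, norm_planeWave, mul_one, Complex.norm_exp,
    Real.exp_le_one_iff]
  simpa using mul_nonpos_of_nonpos_of_nonneg hm hp

end Kernels

lemma ae_halfSpaceMeasure_pos : ∀ᵐ p ∂halfSpaceMeasure, 0 < p.2 := by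
  refine Measure.quasiMeasurePreserving_snd.ae ?_
  rw [Measure.restrict_congr_set Ioi_ae_eq_Ici.symm]
  exact ae_restrict_mem measurableSet_Ioi

section Transforms

variable {f f₁ f₂ f' : ℝ → ℝ → ℝ → ℝ → ℝ} {g g₁ g₂ g' : ℝ → ℝ → ℝ → ℝ} {k l t : ℝ} {m : ℂ}

lemma HalfSpaceIntegrable.add (h₁ : HalfSpaceIntegrable f₁ t) (h₂ : HalfSpaceIntegrable f₂ t) :
    HalfSpaceIntegrable (f₁ + f₂) t :=
  Integrable.add h₁ h₂

lemma HalfSpaceIntegrable.const_smul (h : HalfSpaceIntegrable f t) (c : ℝ) :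
    HalfSpaceIntegrable (c • f) t :=
  Integrable.smul c h

lemma PlaneIntegrable.add (h₁ : PlaneIntegrable g₁ t) (h₂ : PlaneIntegrable g₂ t) :
    PlaneIntegrable (g₁ + g₂) t :=
  Integrable.add h₁ h₂

lemma PlaneIntegrable.const_smul (h : PlaneIntegrable g t) (c : ℝ) :
    PlaneIntegrable (c • g) t :=
  Integrable.smul c h

lemma PlaneIntegrable.planeWave_mul (hg : PlaneIntegrable g t) (k l : ℝ) :
    Integrable fun q : ℝ × ℝ => planeWave k l q * (g q.1 q.2 t : ℂ) :=
  hg.ofReal.bdd_mul (continuous_planeWave k l).aestronglyMeasurable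
    (.of_forall fun q => (norm_planeWave k l q).le)

lemma HalfSpaceIntegrable.waveKernel_mul (hf : HalfSpaceIntegrable f t) (k l : ℝ)
    (hm : m.im ≤ 0) :
    Integrable (fun p : (ℝ × ℝ) × ℝ => waveKernel k l m p * (f p.1.1 p.1.2 p.2 t : ℂ))
      halfSpaceMeasure :=
  hf.ofReal.bdd_mul (continuous_waveKernel k l m).aestronglyMeasurable
    (ae_halfSpaceMeasure_pos.mono fun _ hp => norm_waveKernel_le_one k l hm hp.le)

lemma FT2_eq_integral (hg : PlaneIntegrable g t) :
    FT2 g k l t = ∫ q : ℝ × ℝ, planeWave k l q * (g q.1 q.2 t : ℂ) :=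
  (integral_prod _ (hg.planeWave_mul k l)).symm

lemma FT3_eq_integral (hf : HalfSpaceIntegrable f t) (hm : m.im ≤ 0) :
    FT3 f k l m t
      = ∫ p, waveKernel k l m p * (f p.1.1 p.1.2 p.2 t : ℂ) ∂halfSpaceMeasure := by
  have hK := hf.waveKernel_mul k l hm
  rw [integral_prod _ hK]
  exact (integral_prod _ hK.integral_prod_left).symm

lemma FT3_eq_integral_FT2_slice (hf : HalfSpaceIntegrable f t) (hm : m.im ≤ 0) :
    FT3 f k l m t
      = ∫ z in Ici (0 : ℝ), Complex.exp (-(Complex.I * m) * z) * FT2 (slice f z) k l t := by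
  rw [FT3_eq_integral hf hm, integral_prod_symm _ (hf.waveKernel_mul k l hm)]
  refine integral_congr_ae ?_
  filter_upwards [Integrable.prod_left_ae hf] with z hz
  simp only [waveKernel_eq_mul, mul_assoc, integral_const_mul]
  rw [FT2_eq_integral (g := slice f z) (t := t) hz]

lemma FT2_add (h₁ : PlaneIntegrable g₁ t) (h₂ : PlaneIntegrable g₂ t) :
    FT2 (g₁ + g₂) k l t = FT2 g₁ k l t + FT2 g₂ k l t := by
  rw [FT2_eq_integral h₁, FT2_eq_integral h₂, FT2_eq_integral (h₁.add h₂),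
    ← integral_add (h₁.planeWave_mul k l) (h₂.planeWave_mul k l)]
  simp only [Pi.add_apply, Complex.ofReal_add, mul_add]

lemma FT2_const_smul (c : ℝ) : FT2 (c • g) k l t = c * FT2 g k l t := by
  simp only [FT2, Pi.smul_apply, smul_eq_mul, Complex.ofReal_mul, mul_left_comm _ (c : ℂ),
    integral_const_mul]

lemma FT2_congr (h : ∀ x y, g₁ x y t = g₂ x y t) : FT2 g₁ k l t = FT2 g₂ k l t := by
  simp only [FT2, h]

lemma FT3_add (h₁ : HalfSpaceIntegrable f₁ t) (h₂ : HalfSpaceIntegrable f₂ t) (hm : m.im ≤ 0) :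
    FT3 (f₁ + f₂) k l m t = FT3 f₁ k l m t + FT3 f₂ k l m t := by
  rw [FT3_eq_integral h₁ hm, FT3_eq_integral h₂ hm, FT3_eq_integral (h₁.add h₂) hm,
    ← integral_add (h₁.waveKernel_mul k l hm) (h₂.waveKernel_mul k l hm)]
  simp only [Pi.add_apply, Complex.ofReal_add, mul_add]

lemma FT3_const_smul (c : ℝ) : FT3 (c • f) k l m t = c * FT3 f k l m t := by
  simp only [FT3, Pi.smul_apply, smul_eq_mul, Complex.ofReal_mul, mul_left_comm _ (c : ℂ),
    integral_const_mul]

lemma FT3_congr (h : ∀ x y z, 0 < z → f₁ x y z t = f₂ x y z t) :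
    FT3 f₁ k l m t = FT3 f₂ k l m t := by
  simp only [FT3, integral_Ici_eq_integral_Ioi]
  refine integral_congr_ae (.of_forall fun x => integral_congr_ae (.of_forall fun y => ?_))
  exact setIntegral_congr_fun measurableSet_Ioi fun z hz => by simp only [h x y z hz]

lemma FT2_of_hasDerivAt_fst (hderiv : ∀ x y, HasDerivAt (fun x => g x y t) (g' x y t) x)
    (hg : PlaneIntegrable g t) (hg' : PlaneIntegrable g' t) :
    FT2 g' k l t = Complex.I * k * FT2 g k l t := by
  have hW := hg.planeWave_mul k l
  have hW' := hg'.planeWave_mul k l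
  rw [FT2_eq_integral hg, FT2_eq_integral hg', Measure.volume_eq_prod, integral_prod_symm _ hW,
    integral_prod_symm _ hW', ← integral_const_mul]
  refine integral_congr_ae ?_
  filter_upwards [hW.prod_left_ae, hW'.prod_left_ae] with y hy hy'
  simp only [planeWave_eq_mul, mul_assoc _ (Complex.exp (-(Complex.I * l) * y))] at hy hy' ⊢
  exact integral_cexp_neg_mul_smul_deriv
    (fun x => (hderiv x y).ofReal_comp.const_mul (Complex.exp (-(Complex.I * l) * y))) hy hy'

lemma FT2_of_hasDerivAt_snd (hderiv : ∀ x y, HasDerivAt (fun y => g x y t) (g' x y t) y)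
    (hg : PlaneIntegrable g t) (hg' : PlaneIntegrable g' t) :
    FT2 g' k l t = Complex.I * l * FT2 g k l t := by
  have hW := hg.planeWave_mul k l
  have hW' := hg'.planeWave_mul k l
  rw [FT2_eq_integral hg, FT2_eq_integral hg', Measure.volume_eq_prod, integral_prod _ hW,
    integral_prod _ hW', ← integral_const_mul]
  refine integral_congr_ae ?_
  filter_upwards [hW.prod_right_ae, hW'.prod_right_ae] with x hx hx'
  simp only [planeWave_eq_mul, mul_assoc (Complex.exp (-(Complex.I * k) * x)),
    mul_left_comm (Complex.exp (-(Complex.I * k) * x)) (Complex.exp (-(Complex.I * l) * _))]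
    at hx hx' ⊢
  exact integral_cexp_neg_mul_smul_deriv
    (fun y => (hderiv x y).ofReal_comp.const_mul (Complex.exp (-(Complex.I * k) * x))) hx hx'

lemma FT3_eq_mul_of_FT2_slice_eq_mul {c : ℂ} (hf : HalfSpaceIntegrable f t)
    (hf' : HalfSpaceIntegrable f' t) (hm : m.im ≤ 0)
    (h : ∀ z, PlaneIntegrable (slice f z) t → PlaneIntegrable (slice f' z) t →
      FT2 (slice f' z) k l t = c * FT2 (slice f z) k l t) :
    FT3 f' k l m t = c * FT3 f k l m t := by
  rw [FT3_eq_integral_FT2_slice hf hm, FT3_eq_integral_FT2_slice hf' hm, ← integral_const_mul]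
  refine integral_congr_ae ?_
  filter_upwards [Integrable.prod_left_ae hf, Integrable.prod_left_ae hf'] with z hz hz'
  rw [h z hz hz', mul_left_comm]

lemma FT3_of_hasDerivAt_fst (hderiv : ∀ x y z, HasDerivAt (fun x => f x y z t) (f' x y z t) x)
    (hf : HalfSpaceIntegrable f t) (hf' : HalfSpaceIntegrable f' t) (hm : m.im ≤ 0) :
    FT3 f' k l m t = Complex.I * k * FT3 f k l m t :=
  FT3_eq_mul_of_FT2_slice_eq_mul hf hf' hm fun z =>
    FT2_of_hasDerivAt_fst fun x y => hderiv x y z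

lemma FT3_of_hasDerivAt_snd (hderiv : ∀ x y z, HasDerivAt (fun y => f x y z t) (f' x y z t) y)
    (hf : HalfSpaceIntegrable f t) (hf' : HalfSpaceIntegrable f' t) (hm : m.im ≤ 0) :
    FT3 f' k l m t = Complex.I * l * FT3 f k l m t :=
  FT3_eq_mul_of_FT2_slice_eq_mul hf hf' hm fun z =>
    FT2_of_hasDerivAt_snd fun x y => hderiv x y z

lemma FT3_of_hasDerivAt_thd
    (hderiv : ∀ x y, ∀ z ∈ Ici (0 : ℝ), HasDerivAt (fun z => f x y z t) (f' x y z t) z)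
    (hf : HalfSpaceIntegrable f t) (hf' : HalfSpaceIntegrable f' t)
    (hf₀ : PlaneIntegrable (slice f 0) t) (hm : m.im ≤ 0) :
    FT3 f' k l m t = Complex.I * m * FT3 f k l m t - FT2 (slice f 0) k l t := by
  have hK := hf.waveKernel_mul k l hm
  have hK' := hf'.waveKernel_mul k l hm
  rw [FT3_eq_integral hf hm, FT3_eq_integral hf' hm, FT2_eq_integral hf₀, integral_prod _ hK,
    integral_prod _ hK', ← integral_const_mul,
    ← integral_sub (hK.integral_prod_left.const_mul _) (hf₀.planeWave_mul k l)]
  refine integral_congr_ae ?_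
  filter_upwards [hK.prod_right_ae, hK'.prod_right_ae] with q hq hq'
  simp only [waveKernel_eq_mul, mul_assoc _ (planeWave k l q)] at hq hq' ⊢
  exact integral_Ici_cexp_neg_mul_smul_deriv
    (fun z hz => (hderiv q.1 q.2 z hz).ofReal_comp.const_mul (planeWave k l q)) hq hq'

end Transforms

section PartialDerivatives

open Function

variable {f : ℝ → ℝ → ℝ → ℝ → ℝ}

lemma hasDerivAt_pd_zero (hf : Differentiable ℝ ↿f) (x y z t : ℝ) :
    HasDerivAt (fun x => f x y z t) (pd 0 f x y z t) x :=
  (hf.comp (f := fun x : ℝ => (x, y, z, t)) (by fun_prop) x).hasDerivAt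

lemma hasDerivAt_pd_one (hf : Differentiable ℝ ↿f) (x y z t : ℝ) :
    HasDerivAt (fun y => f x y z t) (pd 1 f x y z t) y :=
  (hf.comp (f := fun y : ℝ => (x, y, z, t)) (by fun_prop) y).hasDerivAt

lemma hasDerivAt_pd_two (hf : Differentiable ℝ ↿f) (x y z t : ℝ) :
    HasDerivAt (fun z => f x y z t) (pd 2 f x y z t) z :=
  (hf.comp (f := fun z : ℝ => (x, y, z, t)) (by fun_prop) z).hasDerivAt

lemma hasDerivAt_pd_three (hf : Differentiable ℝ ↿f) (x y z t : ℝ) :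
    HasDerivAt (fun t => f x y z t) (pd 3 f x y z t) t :=
  (hf.comp (f := fun t : ℝ => (x, y, z, t)) (by fun_prop) t).hasDerivAt

/-- The unit vector of `ℝ × ℝ × ℝ × ℝ` along the `i`-th coordinate, the direction of `pd i`. -/
def axis : Fin 4 → ℝ × ℝ × ℝ × ℝ :=
  ![(1, 0, 0, 0), (0, 1, 0, 0), (0, 0, 1, 0), (0, 0, 0, 1)]

lemma uncurry_pd_eq_lineDeriv (i : Fin 4) (f : ℝ → ℝ → ℝ → ℝ → ℝ) :
    ↿(pd i f) = fun p => lineDeriv ℝ ↿f p (axis i) := by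
  funext ⟨x, y, z, t⟩
  have hshift (h : ℝ → ℝ) (a : ℝ) : deriv h a = deriv (fun s => h (a + s)) 0 := by
    rw [deriv_comp_const_add, add_zero]
  fin_cases i
  · simpa [lineDeriv, axis, HasUncurry.uncurry, pd] using hshift (fun x => f x y z t) x
  · simpa [lineDeriv, axis, HasUncurry.uncurry, pd] using hshift (fun y => f x y z t) y
  · simpa [lineDeriv, axis, HasUncurry.uncurry, pd] using hshift (fun z => f x y z t) z
  · simpa [lineDeriv, axis, HasUncurry.uncurry, pd] using hshift (fun t => f x y z t) t

lemma contDiff_uncurry_pd {n : ℕ} (hf : ContDiff ℝ (n + 1) ↿f) (i : Fin 4) :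
    ContDiff ℝ n ↿(pd i f) := by
  rw [uncurry_pd_eq_lineDeriv]
  have hdiff : Differentiable ℝ ↿f := hf.differentiable (by simp)
  simp only [(hdiff _).lineDeriv_eq_fderiv]
  exact (hf.fderiv_right le_rfl).clm_apply contDiff_const

end PartialDerivatives

section Decay

open Function

variable {f : ℝ → ℝ → ℝ → ℝ → ℝ} {k l t : ℝ} {m : ℂ}

lemma Decays.exists_abs_le (hf : Decays f) {T : ℝ} (hT : 0 < T) :
    ∃ C : ℝ, ∀ (q : ℝ × ℝ) (z t : ℝ), 0 ≤ z → 0 ≤ t → t ≤ T →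
      |f q.1 q.2 z t| ≤ C * (1 + ‖(q, z)‖) ^ (-4 : ℝ) := by
  -- Four exceeds the dimension of the half space, so the bound is integrable over it.
  obtain ⟨C, hC⟩ := hf T hT 4
  have hC₀ : 0 ≤ C := by simpa using (abs_nonneg _).trans (hC 0 0 0 0 le_rfl le_rfl hT.le)
  refine ⟨C, fun q z t hz ht htT => (hC q.1 q.2 z t hz ht htT).trans ?_⟩
  have hnorm : ‖(q, z)‖ ≤ |q.1| + |q.2| + z := by
    rw [norm_prod_le_iff, Prod.norm_def, Real.norm_eq_abs, Real.norm_eq_abs, Real.norm_eq_abs,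
      abs_of_nonneg hz]
    constructor
    · exact max_le (by linarith [abs_nonneg q.2]) (by linarith [abs_nonneg q.1])
    · linarith [abs_nonneg q.1, abs_nonneg q.2]
  rw [Real.rpow_neg (by positivity), div_eq_mul_inv, show (4 : ℝ) = (4 : ℕ) by norm_num,
    Real.rpow_natCast]
  gcongr C * (?_ ^ 4)⁻¹
  linarith

lemma integrable_one_add_norm_halfSpaceMeasure :
    Integrable (fun p => (1 + ‖p‖) ^ (-4 : ℝ)) halfSpaceMeasure := by
  have hspace : Integrable (fun p : (ℝ × ℝ) × ℝ => (1 + ‖p‖) ^ (-4 : ℝ)) (volume.prod volume) :=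
    integrable_one_add_norm (by simp; norm_num)
  exact hspace.mono_measure (Measure.prod_mono le_rfl Measure.restrict_le_self)

/-- `f` is `n` times continuously differentiable and decays rapidly together with its partial
derivatives of order at most `n`; a list of indices encodes an iterated partial derivative, with
the outermost one first. -/
structure RapidDecay (n : ℕ) (f : ℝ → ℝ → ℝ → ℝ → ℝ) : Prop where
  contDiff : ContDiff ℝ n ↿f
  decays : ∀ s : List (Fin 4), s.length ≤ n → Decays (s.foldr pd f)

lemma Smooth4.rapidDecay_two (hf : Smooth4 f) (hd : DecaysAll f) : RapidDecay 2 f where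
  contDiff := ContDiff.of_le hf (WithTop.coe_le_coe.mpr le_top)
  decays
    | [], _ => hd.1
    | [i], _ => hd.2.1 i
    | [i, j], _ => hd.2.2 i j
    | _ :: _ :: _ :: _, hs => absurd hs (by simp)

namespace RapidDecay

lemma of_le {n n' : ℕ} (h : RapidDecay n f) (hn : n' ≤ n) : RapidDecay n' f where
  contDiff := h.contDiff.of_le (by exact_mod_cast hn)
  decays s hs := h.decays s (hs.trans hn)

lemma partialDeriv {n : ℕ} (h : RapidDecay (n + 1) f) (i : Fin 4) : RapidDecay n (pd i f) where
  contDiff := contDiff_uncurry_pd (by exact_mod_cast h.contDiff) i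
  decays s hs := by simpa using h.decays (s ++ [i]) (by simpa using hs)

lemma differentiable (h : RapidDecay 1 f) : Differentiable ℝ ↿f :=
  h.contDiff.differentiable (by simp)

lemma halfSpaceIntegrable {n : ℕ} (h : RapidDecay n f) (ht : 0 ≤ t) : HalfSpaceIntegrable f t := by
  obtain ⟨C, hC⟩ := (h.decays [] n.zero_le).exists_abs_le (by linarith : 0 < t + 1)
  have hcont : Continuous fun p : (ℝ × ℝ) × ℝ => f p.1.1 p.1.2 p.2 t :=
    h.contDiff.continuous.comp (f := fun p : (ℝ × ℝ) × ℝ => (p.1.1, p.1.2, p.2, t)) (by fun_prop)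
  exact (integrable_one_add_norm_halfSpaceMeasure.const_mul C).mono' hcont.aestronglyMeasurable
    (ae_halfSpaceMeasure_pos.mono fun p hp => hC p.1 p.2 t hp.le ht (by linarith))

lemma planeIntegrable_slice_zero {n : ℕ} (h : RapidDecay n f) (ht : 0 ≤ t) :
    PlaneIntegrable (slice f 0) t := by
  obtain ⟨C, hC⟩ := (h.decays [] n.zero_le).exists_abs_le (by linarith : 0 < t + 1)
  have hcont : Continuous fun q : ℝ × ℝ => f q.1 q.2 0 t :=
    h.contDiff.continuous.comp (f := fun q : ℝ × ℝ => (q.1, q.2, 0, t)) (by fun_prop)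
  have hdom : Integrable fun q : ℝ × ℝ => (1 + ‖q‖) ^ (-4 : ℝ) :=
    integrable_one_add_norm (by simp; norm_num)
  refine (hdom.const_mul C).mono' hcont.aestronglyMeasurable (.of_forall fun q => ?_)
  simpa [Prod.norm_mk] using hC q 0 t le_rfl ht (by linarith)

lemma FT2_slice_zero_pd_zero (h : RapidDecay 1 f) (ht : 0 ≤ t) :
    FT2 (slice (pd 0 f) 0) k l t = Complex.I * k * FT2 (slice f 0) k l t :=
  FT2_of_hasDerivAt_fst (fun x y => hasDerivAt_pd_zero h.differentiable x y 0 t)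
    (h.planeIntegrable_slice_zero ht) ((h.partialDeriv 0).planeIntegrable_slice_zero ht)

lemma FT2_slice_zero_pd_one (h : RapidDecay 1 f) (ht : 0 ≤ t) :
    FT2 (slice (pd 1 f) 0) k l t = Complex.I * l * FT2 (slice f 0) k l t :=
  FT2_of_hasDerivAt_snd (fun x y => hasDerivAt_pd_one h.differentiable x y 0 t)
    (h.planeIntegrable_slice_zero ht) ((h.partialDeriv 1).planeIntegrable_slice_zero ht)

lemma FT3_pd_zero (h : RapidDecay 1 f) (hm : m.im ≤ 0) (ht : 0 ≤ t) :
    FT3 (pd 0 f) k l m t = Complex.I * k * FT3 f k l m t :=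
  FT3_of_hasDerivAt_fst (fun x y z => hasDerivAt_pd_zero h.differentiable x y z t)
    (h.halfSpaceIntegrable ht) ((h.partialDeriv 0).halfSpaceIntegrable ht) hm

lemma FT3_pd_one (h : RapidDecay 1 f) (hm : m.im ≤ 0) (ht : 0 ≤ t) :
    FT3 (pd 1 f) k l m t = Complex.I * l * FT3 f k l m t :=
  FT3_of_hasDerivAt_snd (fun x y z => hasDerivAt_pd_one h.differentiable x y z t)
    (h.halfSpaceIntegrable ht) ((h.partialDeriv 1).halfSpaceIntegrable ht) hm

lemma FT3_pd_two (h : RapidDecay 1 f) (hm : m.im ≤ 0) (ht : 0 ≤ t) :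
    FT3 (pd 2 f) k l m t = Complex.I * m * FT3 f k l m t - FT2 (slice f 0) k l t :=
  FT3_of_hasDerivAt_thd (fun x y z _ => hasDerivAt_pd_two h.differentiable x y z t)
    (h.halfSpaceIntegrable ht) ((h.partialDeriv 2).halfSpaceIntegrable ht)
    (h.planeIntegrable_slice_zero ht) hm

lemma hasDerivAt_FT3 (h : RapidDecay 1 f) (hm : m.im ≤ 0) (ht : 0 < t) :
    HasDerivAt (fun τ => FT3 f k l m τ) (FT3 (pd 3 f) k l m t) t := by
  obtain ⟨C, hC⟩ := ((h.partialDeriv 3).decays [] le_rfl).exists_abs_le (by linarith : 0 < t + 1)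
  have hK {τ : ℝ} (hτ : 0 < τ) := (h.halfSpaceIntegrable hτ.le).waveKernel_mul k l hm
  have hK' := ((h.partialDeriv 3).halfSpaceIntegrable ht.le).waveKernel_mul k l hm
  have hbound : ∀ᵐ p ∂halfSpaceMeasure, ∀ τ ∈ Ioo 0 (t + 1),
      ‖waveKernel k l m p * (pd 3 f p.1.1 p.1.2 p.2 τ : ℂ)‖ ≤ C * (1 + ‖p‖) ^ (-4 : ℝ) := by
    filter_upwards [ae_halfSpaceMeasure_pos] with p hp τ hτ
    rw [norm_mul, Complex.norm_real]
    exact (mul_le_of_le_one_left (norm_nonneg _) (norm_waveKernel_le_one k l hm hp.le)).trans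
      (hC p.1 p.2 τ hp.le hτ.1.le hτ.2.le)
  rw [FT3_eq_integral ((h.partialDeriv 3).halfSpaceIntegrable ht.le) hm]
  refine (hasDerivAt_integral_of_dominated_loc_of_deriv_le
    (Ioo_mem_nhds ht (lt_add_one t))
    ((lt_mem_nhds ht).mono fun τ hτ => (hK hτ).aestronglyMeasurable) (hK ht)
    hK'.aestronglyMeasurable hbound (integrable_one_add_norm_halfSpaceMeasure.const_mul C)
    (.of_forall fun p τ _ => (hasDerivAt_pd_three h.differentiable p.1.1 p.1.2 p.2 τ
      ).ofReal_comp.const_mul (waveKernel k l m p))).2.congr_of_eventuallyEq ?_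
  filter_upwards [lt_mem_nhds ht] with τ hτ
  exact FT3_eq_integral (h.halfSpaceIntegrable hτ.le) hm

end RapidDecay

end Decay

section TransformedEquations

variable {lam mu t k l : ℝ} {m : ℂ} {u v w : ℝ → ℝ → ℝ → ℝ → ℝ} {g₂ g₃ : ℝ → ℝ → ℝ → ℝ}

lemma FT3_eq_of_elasticOperator_eq {a b c : ℝ} {f₁ f₂ f₃ f₄ f₅ F : ℝ → ℝ → ℝ → ℝ → ℝ}
    (h₁ : HalfSpaceIntegrable f₁ t) (h₂ : HalfSpaceIntegrable f₂ t)
    (h₃ : HalfSpaceIntegrable f₃ t) (h₄ : HalfSpaceIntegrable f₄ t)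
    (h₅ : HalfSpaceIntegrable f₅ t) (hm : m.im ≤ 0)
    (hF : ∀ x y z, 0 < z → a * f₁ x y z t + b * (f₂ x y z t + f₃ x y z t)
      + c * (f₄ x y z t + f₅ x y z t) = F x y z t) :
    FT3 F k l m t = a * FT3 f₁ k l m t + b * (FT3 f₂ k l m t + FT3 f₃ k l m t)
      + c * (FT3 f₄ k l m t + FT3 f₅ k l m t) := by
  have h₂₃ := (h₂.add h₃).const_smul b
  have h₄₅ := (h₄.add h₅).const_smul c
  rw [← FT3_congr (f₁ := a • f₁ + b • (f₂ + f₃) + c • (f₄ + f₅)) hF,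
    FT3_add ((h₁.const_smul a).add h₂₃) h₄₅ hm, FT3_add (h₁.const_smul a) h₂₃ hm,
    FT3_const_smul, FT3_const_smul, FT3_const_smul, FT3_add h₂ h₃ hm, FT3_add h₄ h₅ hm]

lemma FT2_normalDeriv_snd (hv : RapidDecay 1 v) (hw : RapidDecay 1 w) (ht : 0 ≤ t)
    (hbc : ∀ x y, pd 2 v x y 0 t + pd 1 w x y 0 t = g₂ x y t) :
    FT2 (slice (pd 2 v) 0) k l t = FT2 g₂ k l t - Complex.I * l * FT2 (slice w 0) k l t := by
  rw [← FT2_congr (g₁ := slice (pd 2 v) 0 + slice (pd 1 w) 0) hbc,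
    FT2_add ((hv.partialDeriv 2).planeIntegrable_slice_zero ht)
      ((hw.partialDeriv 1).planeIntegrable_slice_zero ht), hw.FT2_slice_zero_pd_one ht,
    add_sub_cancel_right]

lemma FT2_normalDeriv_thd {c : ℝ} (hu : RapidDecay 1 u) (hv : RapidDecay 1 v)
    (hw : RapidDecay 1 w) (ht : 0 ≤ t)
    (hbc : ∀ x y, pd 2 w x y 0 t + c * (pd 0 u x y 0 t + pd 1 v x y 0 t) = g₃ x y t) :
    FT2 (slice (pd 2 w) 0) k l t = FT2 g₃ k l t
      - c * (Complex.I * k * FT2 (slice u 0) k l t + Complex.I * l * FT2 (slice v 0) k l t) := by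
  have hux := (hu.partialDeriv 0).planeIntegrable_slice_zero ht
  have hvy := (hv.partialDeriv 1).planeIntegrable_slice_zero ht
  rw [← FT2_congr (g₁ := slice (pd 2 w) 0 + c • (slice (pd 0 u) 0 + slice (pd 1 v) 0)) hbc,
    FT2_add ((hw.partialDeriv 2).planeIntegrable_slice_zero ht) ((hux.add hvy).const_smul c),
    FT2_const_smul, FT2_add hux hvy, hu.FT2_slice_zero_pd_zero ht, hv.FT2_slice_zero_pd_one ht,
    add_sub_cancel_right]

lemma FT3_acceleration_snd (hu : RapidDecay 2 u) (hv : RapidDecay 2 v) (hw : RapidDecay 2 w)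
    (hm : m.im ≤ 0) (ht : 0 ≤ t)
    (hpde : ∀ x y z, 0 < z → (lam + 2 * mu) * pd 1 (pd 1 v) x y z t
      + (lam + mu) * (pd 1 (pd 2 w) x y z t + pd 1 (pd 0 u) x y z t)
      + mu * (pd 2 (pd 2 v) x y z t + pd 0 (pd 0 v) x y z t) = pd 3 (pd 3 v) x y z t)
    (hbc : ∀ x y, pd 2 v x y 0 t + pd 1 w x y 0 t = g₂ x y t) :
    FT3 (pd 3 (pd 3 v)) k l m t
      = -mu * (k ^ 2 + l ^ 2 + m ^ 2) * FT3 v k l m t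
        - (lam + mu) * l * (k * FT3 u k l m t + l * FT3 v k l m t + m * FT3 w k l m t)
        - Complex.I * lam * l * FT2 (slice w 0) k l t - mu * FT2 g₂ k l t
        - Complex.I * mu * m * FT2 (slice v 0) k l t := by
  have hu₁ := hu.of_le one_le_two
  have hv₁ := hv.of_le one_le_two
  have hw₁ := hw.of_le one_le_two
  have hint {f : ℝ → ℝ → ℝ → ℝ → ℝ} (hf : RapidDecay 2 f) (i j : Fin 4) :=
    ((hf.partialDeriv j).partialDeriv i).halfSpaceIntegrable ht
  rw [FT3_eq_of_elasticOperator_eq (hint hv 1 1) (hint hw 1 2) (hint hu 1 0) (hint hv 2 2)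
    (hint hv 0 0) hm hpde]
  simp only [RapidDecay.FT3_pd_zero, RapidDecay.FT3_pd_one, RapidDecay.FT3_pd_two,
    hu.partialDeriv, hv.partialDeriv, hw.partialDeriv, hu₁, hv₁, hw₁, hm, ht,
    FT2_normalDeriv_snd hv₁ hw₁ ht hbc]
  push_cast
  linear_combination (mu * (k ^ 2 + m ^ 2) * FT3 v k l m t + (lam + 2 * mu) * l ^ 2 * FT3 v k l m t
    + (lam + mu) * l * (k * FT3 u k l m t + m * FT3 w k l m t)) * Complex.I_sq

lemma FT3_acceleration_thd (hlm : lam + 2 * mu ≠ 0) (hu : RapidDecay 2 u) (hv : RapidDecay 2 v)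
    (hw : RapidDecay 2 w) (hm : m.im ≤ 0) (ht : 0 ≤ t)
    (hpde : ∀ x y z, 0 < z → (lam + 2 * mu) * pd 2 (pd 2 w) x y z t
      + (lam + mu) * (pd 2 (pd 0 u) x y z t + pd 2 (pd 1 v) x y z t)
      + mu * (pd 0 (pd 0 w) x y z t + pd 1 (pd 1 w) x y z t) = pd 3 (pd 3 w) x y z t)
    (hbc : ∀ x y, pd 2 w x y 0 t
      + lam / (lam + 2 * mu) * (pd 0 u x y 0 t + pd 1 v x y 0 t) = g₃ x y t) :
    FT3 (pd 3 (pd 3 w)) k l m t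
      = -mu * (k ^ 2 + l ^ 2 + m ^ 2) * FT3 w k l m t
        - (lam + mu) * m * (k * FT3 u k l m t + l * FT3 v k l m t + m * FT3 w k l m t)
        - (lam + 2 * mu) * FT2 g₃ k l t
        - Complex.I * mu * (k * FT2 (slice u 0) k l t + l * FT2 (slice v 0) k l t)
        - Complex.I * m * (lam + 2 * mu) * FT2 (slice w 0) k l t := by
  have hu₁ := hu.of_le one_le_two
  have hv₁ := hv.of_le one_le_two
  have hw₁ := hw.of_le one_le_two
  have hint {f : ℝ → ℝ → ℝ → ℝ → ℝ} (hf : RapidDecay 2 f) (i j : Fin 4) :=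
    ((hf.partialDeriv j).partialDeriv i).halfSpaceIntegrable ht
  have hratio : ((lam : ℂ) + 2 * mu) * (lam / (lam + 2 * mu)) = lam :=
    mul_div_cancel₀ _ (by exact_mod_cast hlm)
  rw [FT3_eq_of_elasticOperator_eq (hint hw 2 2) (hint hu 2 0) (hint hv 2 1) (hint hw 0 0)
    (hint hw 1 1) hm hpde]
  simp only [RapidDecay.FT3_pd_zero, RapidDecay.FT3_pd_one, RapidDecay.FT3_pd_two,
    RapidDecay.FT2_slice_zero_pd_zero, RapidDecay.FT2_slice_zero_pd_one,
    hu.partialDeriv, hv.partialDeriv, hw.partialDeriv, hu₁, hv₁, hw₁, hm, ht,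
    FT2_normalDeriv_thd hu₁ hv₁ hw₁ ht hbc]
  push_cast
  linear_combination (mu * (k ^ 2 + l ^ 2) * FT3 w k l m t + (lam + 2 * mu) * m ^ 2 * FT3 w k l m t
    + (lam + mu) * m * (k * FT3 u k l m t + l * FT3 v k l m t)) * Complex.I_sq
    + (Complex.I * k * FT2 (slice u 0) k l t + Complex.I * l * FT2 (slice v 0) k l t) * hratio

end TransformedEquations

theorem global_ODE_Q_general {lam mu t : ℝ} (hlm : lam + 2 * mu ≠ 0) (ht : 0 < t)
    {u v w : ℝ → ℝ → ℝ → ℝ → ℝ} (g₁ : ℝ → ℝ → ℝ → ℝ) {g₂ g₃ : ℝ → ℝ → ℝ → ℝ}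
    (hu : RapidDecay 2 u) (hv : RapidDecay 2 v) (hw : RapidDecay 2 w)
    (hpde₂ : ∀ x y z, 0 < z → (lam + 2 * mu) * pd 1 (pd 1 v) x y z t
      + (lam + mu) * (pd 1 (pd 2 w) x y z t + pd 1 (pd 0 u) x y z t)
      + mu * (pd 2 (pd 2 v) x y z t + pd 0 (pd 0 v) x y z t) = pd 3 (pd 3 v) x y z t)
    (hpde₃ : ∀ x y z, 0 < z → (lam + 2 * mu) * pd 2 (pd 2 w) x y z t
      + (lam + mu) * (pd 2 (pd 0 u) x y z t + pd 2 (pd 1 v) x y z t)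
      + mu * (pd 0 (pd 0 w) x y z t + pd 1 (pd 1 w) x y z t) = pd 3 (pd 3 w) x y z t)
    (hbc₂ : ∀ x y, pd 2 v x y 0 t + pd 1 w x y 0 t = g₂ x y t)
    (hbc₃ : ∀ x y, pd 2 w x y 0 t
      + lam / (lam + 2 * mu) * (pd 0 u x y 0 t + pd 1 v x y 0 t) = g₃ x y t)
    (k l : ℝ) {m : ℂ} (hm : m.im ≤ 0) :
    HasDerivAt (deriv fun τ => m * FT3 v k l m τ - l * FT3 w k l m τ)
      (FQ lam mu u v w g₁ g₂ g₃ k l m t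
        - mu * (k ^ 2 + l ^ 2 + m ^ 2) * (m * FT3 v k l m t - l * FT3 w k l m t)) t := by
  have hQ {f g : ℝ → ℝ → ℝ → ℝ → ℝ} (hf : RapidDecay 1 f) (hg : RapidDecay 1 g) {τ : ℝ}
      (hτ : 0 < τ) : HasDerivAt (fun τ => m * FT3 f k l m τ - l * FT3 g k l m τ)
        (m * FT3 (pd 3 f) k l m τ - l * FT3 (pd 3 g) k l m τ) τ :=
    ((hf.hasDerivAt_FT3 hm hτ).const_mul m).sub ((hg.hasDerivAt_FT3 hm hτ).const_mul (l : ℂ))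
  have hderiv : deriv (fun τ => m * FT3 v k l m τ - l * FT3 w k l m τ)
      =ᶠ[nhds t] fun τ => m * FT3 (pd 3 v) k l m τ - l * FT3 (pd 3 w) k l m τ := by
    filter_upwards [lt_mem_nhds ht] with τ hτ
    exact (hQ (hv.of_le one_le_two) (hw.of_le one_le_two) hτ).deriv
  refine ((hQ (hv.partialDeriv 3) (hw.partialDeriv 3) ht).congr_of_eventuallyEq
    hderiv).congr_deriv ?_
  rw [FT3_acceleration_snd hu hv hw hm ht.le hpde₂ hbc₂,
    FT3_acceleration_thd hlm hu hv hw hm ht.le hpde₃ hbc₃, FQ]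
  ring

/-- under the Lamé–Navier equations, decay, and the stress boundary conditions,
the combination `Q = mv̂ − lŵ` of the half-space Fourier transforms satisfies the ODE
`∂²ₜQ + μ(k²+l²+m²)Q = F_Q` for all `k, l ∈ ℝ`, `Im m ≤ 0`, `t > 0`. -/
theorem global_ODE_Q (lam mu : ℝ) (hmu : 0 < mu) (hl : 0 < lam + 2 * mu)
    (u v w : ℝ → ℝ → ℝ → ℝ → ℝ) (g₁ g₂ g₃ : ℝ → ℝ → ℝ → ℝ)
    (hsu : Smooth4 u) (hsv : Smooth4 v) (hsw : Smooth4 w)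
    (hpde : LameNavier lam mu u v w)
    (hdu : DecaysAll u) (hdv : DecaysAll v) (hdw : DecaysAll w)
    (hg₁ : Continuous fun p : ℝ × ℝ × ℝ => g₁ p.1 p.2.1 p.2.2)
    (hg₂ : Continuous fun p : ℝ × ℝ × ℝ => g₂ p.1 p.2.1 p.2.2)
    (hg₃ : Continuous fun p : ℝ × ℝ × ℝ => g₃ p.1 p.2.1 p.2.2)
    (hbc : StressBC lam mu u v w g₁ g₂ g₃) :
    ∀ (k l : ℝ) (m : ℂ), m.im ≤ 0 → ∀ t : ℝ, 0 < t →
      deriv (deriv (fun τ : ℝ => m * FT3 v k l m τ - (l : ℂ) * FT3 w k l m τ)) t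
        + (mu : ℂ) * ((k : ℂ) ^ 2 + (l : ℂ) ^ 2 + m ^ 2) *
            (m * FT3 v k l m t - (l : ℂ) * FT3 w k l m t)
        = FQ lam mu u v w g₁ g₂ g₃ k l m t := by
  intro k l m hm t ht
  rw [(global_ODE_Q_general hl.ne' ht g₁ (hsu.rapidDecay_two hdu) (hsv.rapidDecay_two hdv)
    (hsw.rapidDecay_two hdw) (fun x y z hz => (hpde x y z t hz ht).2.1)
    (fun x y z hz => (hpde x y z t hz ht).2.2) (fun x y => (hbc x y t ht).2.1)
    (fun x y => (hbc x y t ht).2.2) k l hm).deriv, sub_add_cancel]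
end
end

section
/- Under the stated hypotheses, for all k, l ∈ ℝ, all m ∈ ℂ with Im m ≤ 0, and all t > 0, the function R(k,l,m,t) := k·ŵ(k,l,m,t) − m·û(k,l,m,t) satisfies the ordinary differential equation ∂²ₜR + μ(k²+l²+m²)R = F_R(k,l,m,t), where F_R := −( (λ+2μ)k·g̃₃ + iμk²·ũ + iμkl·ṽ ) + m·( μ·g̃₁ − 2iμk·w̃ ) + i μ m²·ũ. -/
open MeasureTheory Set

noncomputable section

/-!
The half-space and boundary transforms are one integral `FT ρ` over `ℝ × ℝ × [0, ∞)`, with the depth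
variable weighted by Lebesgue measure or by the Dirac mass at `0`. Under `FT ρ` the horizontal
derivatives become multiplication by `ik` and `il`; under the half-space transform `∂_z` becomes
multiplication by `im` minus the boundary transform. Up to boundary terms, the part
`(λ + μ) ∇ div` of the Lamé operator transforms into a multiple of `(k, l, m)`, so it drops out of
`R = kŵ − mû`, and only the shear part `μ Δ` survives. The boundary values of `u_z` and `w_z` are
eliminated with the first and third stress conditions.
-/

open Complex Filter Topology
open scoped ContDiff

section Calculus

theorem contDiff_deriv_of_uncurry {𝕜 E F : Type*} [NontriviallyNormedField 𝕜]
    [NormedAddCommGroup E] [NormedSpace 𝕜 E] [NormedAddCommGroup F] [NormedSpace 𝕜 F]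
    {f : E → 𝕜 → F} {g : E → 𝕜} {n n' : ℕ∞ω} (hf : ContDiff 𝕜 n' (Function.uncurry f))
    (hg : ContDiff 𝕜 n g) (hn : n + 1 ≤ n') : ContDiff 𝕜 n fun p => deriv (f p) (g p) :=
  hf.fderiv_apply hg contDiff_const hn

theorem hasDerivAt_deriv_of_eventually {𝕜 F : Type*} [NontriviallyNormedField 𝕜]
    [NormedAddCommGroup F] [NormedSpace 𝕜 F] {f f' : 𝕜 → F} {f'' : F} {x : 𝕜}
    (hf : ∀ᶠ y in 𝓝 x, HasDerivAt f (f' y) y) (hf' : HasDerivAt f' f'' x) :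
    HasDerivAt (deriv f) f'' x :=
  hf'.congr_of_eventuallyEq (hf.mono fun _ h => h.deriv)

theorem hasDerivAt_cexp_mul_ofReal {φ : ℝ → ℂ} {φ' : ℂ} {g : ℝ → ℝ} {g' s : ℝ}
    (hφ : HasDerivAt φ φ' s) (hg : HasDerivAt g g' s) :
    HasDerivAt (fun r => cexp (φ r) * (g r : ℂ))
      (cexp (φ s) * (g' : ℂ) + φ' * (cexp (φ s) * (g s : ℂ))) s :=
  (hφ.cexp.mul hg.ofReal_comp).congr_deriv (by ring)

end Calculus

section Integration

variable {X E : Type*} [MeasurableSpace X] [NormedAddCommGroup E] [NormedSpace ℝ E]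
  {ν : Measure X} [SFinite ν]

theorem integral_prod_deriv_fst_eq_zero {F F' : ℝ × X → E}
    (hderiv : ∀ x s, HasDerivAt (fun r => F (r, x)) (F' (s, x)) s)
    (hF : Integrable F (volume.prod ν)) (hF' : Integrable F' (volume.prod ν)) :
    ∫ p, F' p ∂(volume.prod ν) = 0 := by
  rw [integral_prod_symm _ hF']
  refine integral_eq_zero_of_ae ?_
  filter_upwards [hF.prod_left_ae, hF'.prod_left_ae] with x hx hx'
  exact integral_eq_zero_of_hasDerivAt_of_integrable (hderiv x) hx' hx

theorem integral_prod_Ici_deriv_snd [CompleteSpace E] {F F' : X × ℝ → E} {a : ℝ}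
    (hderiv : ∀ x, ∀ s ∈ Ici a, HasDerivAt (fun r => F (x, r)) (F' (x, s)) s)
    (hF : Integrable F (ν.prod (volume.restrict (Ici a))))
    (hF' : Integrable F' (ν.prod (volume.restrict (Ici a)))) :
    ∫ p, F' p ∂(ν.prod (volume.restrict (Ici a))) = -∫ x, F (x, a) ∂ν := by
  rw [integral_prod _ hF', ← integral_neg]
  refine integral_congr_ae ?_
  filter_upwards [hF.prod_right_ae, hF'.prod_right_ae] with x hx hx'
  have hIoi : IntegrableOn (fun s => F' (x, s)) (Ioi a) :=
    IntegrableOn.mono_set hx' Ioi_subset_Ici_self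
  have hlim : Tendsto (fun s => F (x, s)) atTop (𝓝 0) :=
    tendsto_zero_of_hasDerivAt_of_integrableOn_Ioi (fun s hs => hderiv x s (Ioi_subset_Ici_self hs))
      hIoi
      (IntegrableOn.mono_set hx Ioi_subset_Ici_self)
  rw [integral_Ici_eq_integral_Ioi, integral_Ioi_of_hasDerivAt_of_tendsto' (hderiv x) hIoi hlim,
    zero_sub]

end Integration

section TemperateGrowth

variable {E F : Type*} [NormedAddCommGroup E] [MeasurableSpace E] [NormedAddCommGroup F]
  [MeasurableSpace F]

instance hasTemperateGrowth_restrict {μ : Measure E} [μ.HasTemperateGrowth] (s : Set E) :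
    (μ.restrict s).HasTemperateGrowth :=
  ⟨μ.integrablePower, (Measure.integrable_pow_neg_integrablePower μ).restrict⟩

instance hasTemperateGrowth_prod [OpensMeasurableSpace (E × F)] {μ : Measure E}
    {ν : Measure F} [SFinite ν] [μ.HasTemperateGrowth] [ν.HasTemperateGrowth] :
    (μ.prod ν).HasTemperateGrowth := by
  refine ⟨μ.integrablePower + ν.integrablePower,
    ((Measure.integrable_pow_neg_integrablePower μ).mul_prod
      (Measure.integrable_pow_neg_integrablePower ν)).mono' ?_ (.of_forall fun p => ?_)⟩
  · exact (((by fun_prop : Continuous fun p : E × F => 1 + ‖p‖).rpow_const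
      fun p => .inl (by positivity)).measurable).aestronglyMeasurable
  · rw [Real.norm_of_nonneg (by positivity), Nat.cast_add, neg_add,
      Real.rpow_add (by positivity)]
    gcongr ?_ * ?_ <;> refine Real.rpow_le_rpow_of_nonpos (by positivity) ?_ (by simp)
    · simpa using norm_fst_le p
    · simpa using norm_snd_le p

end TemperateGrowth

section PartialDerivatives

variable {f : ℝ → ℝ → ℝ → ℝ → ℝ}

namespace Smooth4

theorem continuous (hf : Smooth4 f) :
    Continuous fun p : ℝ × ℝ × ℝ × ℝ => f p.1 p.2.1 p.2.2.1 p.2.2.2 :=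
  ContDiff.continuous hf

theorem hasDerivAt_x (hf : Smooth4 f) (x y z t : ℝ) :
    HasDerivAt (fun r => f r y z t) (pd 0 f x y z t) x :=
  ((hf.comp (f := fun r : ℝ => (r, y, z, t)) (by fun_prop)).differentiable (by simp) x).hasDerivAt

theorem hasDerivAt_y (hf : Smooth4 f) (x y z t : ℝ) :
    HasDerivAt (fun r => f x r z t) (pd 1 f x y z t) y :=
  ((hf.comp (f := fun r : ℝ => (x, r, z, t)) (by fun_prop)).differentiable (by simp) y).hasDerivAt

theorem hasDerivAt_z (hf : Smooth4 f) (x y z t : ℝ) :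
    HasDerivAt (fun r => f x y r t) (pd 2 f x y z t) z :=
  ((hf.comp (f := fun r : ℝ => (x, y, r, t)) (by fun_prop)).differentiable (by simp) z).hasDerivAt

theorem hasDerivAt_t (hf : Smooth4 f) (x y z t : ℝ) :
    HasDerivAt (fun r => f x y z r) (pd 3 f x y z t) t :=
  ((hf.comp (f := fun r : ℝ => (x, y, z, r)) (by fun_prop)).differentiable (by simp) t).hasDerivAt

protected theorem pd (hf : Smooth4 f) (i : Fin 4) : Smooth4 (pd i f) := by
  fin_cases i
  · exact contDiff_deriv_of_uncurry
      (f := fun (p : ℝ × ℝ × ℝ × ℝ) x => f x p.2.1 p.2.2.1 p.2.2.2) (g := fun p => p.1)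
      (hf.comp (f := fun q : (ℝ × ℝ × ℝ × ℝ) × ℝ => (q.2, q.1.2)) (by fun_prop))
      (by fun_prop) le_rfl
  · exact contDiff_deriv_of_uncurry
      (f := fun (p : ℝ × ℝ × ℝ × ℝ) y => f p.1 y p.2.2.1 p.2.2.2) (g := fun p => p.2.1)
      (hf.comp (f := fun q : (ℝ × ℝ × ℝ × ℝ) × ℝ => (q.1.1, q.2, q.1.2.2)) (by fun_prop))
      (by fun_prop) le_rfl
  · exact contDiff_deriv_of_uncurry
      (f := fun (p : ℝ × ℝ × ℝ × ℝ) z => f p.1 p.2.1 z p.2.2.2) (g := fun p => p.2.2.1)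
      (hf.comp (f := fun q : (ℝ × ℝ × ℝ × ℝ) × ℝ => (q.1.1, q.1.2.1, q.2, q.1.2.2.2))
        (by fun_prop)) (by fun_prop) le_rfl
  · exact contDiff_deriv_of_uncurry
      (f := fun (p : ℝ × ℝ × ℝ × ℝ) t => f p.1 p.2.1 p.2.2.1 t) (g := fun p => p.2.2.2)
      (hf.comp (f := fun q : (ℝ × ℝ × ℝ × ℝ) × ℝ => (q.1.1, q.1.2.1, q.1.2.2.1, q.2))
        (by fun_prop)) (by fun_prop) le_rfl

end Smooth4

theorem Decays.exists_norm_le (hf : Decays f) {T : ℝ} (hT : 0 < T) (n : ℕ) :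
    ∃ C, ∀ t ∈ Icc 0 T, ∀ p : ℝ × ℝ × ℝ, 0 ≤ p.2.2 →
      ‖f p.1 p.2.1 p.2.2 t‖ ≤ C * (1 + ‖p‖) ^ (-(n : ℝ)) := by
  obtain ⟨C, hC⟩ := hf T hT n
  refine ⟨|C|, fun t ht p hp => (hC _ _ _ t hp ht.1 ht.2).trans ?_⟩
  have hnorm : 1 + ‖p‖ ≤ 1 + |p.1| + |p.2.1| + p.2.2 := by
    have : ‖p‖ ≤ |p.1| + |p.2.1| + p.2.2 := by
      simp only [Prod.norm_def, Real.norm_eq_abs, abs_of_nonneg hp, sup_le_iff]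
      refine ⟨?_, ?_, ?_⟩ <;> linarith [abs_nonneg p.1, abs_nonneg p.2.1]
    linarith
  rw [Real.rpow_neg (by positivity), Real.rpow_natCast, ← div_eq_mul_inv]
  gcongr
  exact le_abs_self C

/-- `f` is smooth and all its partial derivatives of order at most `n` decay rapidly in space,
locally uniformly in time. -/
def RapidlyDecaying : ℕ → (ℝ → ℝ → ℝ → ℝ → ℝ) → Prop
  | 0, f => Smooth4 f ∧ Decays f
  | n + 1, f => Smooth4 f ∧ Decays f ∧ ∀ i, RapidlyDecaying n (pd i f)

namespace RapidlyDecaying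

variable {n : ℕ}

theorem smooth (hf : RapidlyDecaying n f) : Smooth4 f := by
  cases n <;> exact hf.1

theorem decays (hf : RapidlyDecaying n f) : Decays f := by
  cases n
  exacts [hf.2, hf.2.1]

protected theorem pd (hf : RapidlyDecaying (n + 1) f) (i : Fin 4) : RapidlyDecaying n (pd i f) :=
  hf.2.2 i

theorem of_decaysAll (hs : Smooth4 f) (hd : DecaysAll f) : RapidlyDecaying 2 f :=
  ⟨hs, hd.1, fun i => ⟨hs.pd i, hd.2.1 i, fun j => ⟨(hs.pd i).pd j, hd.2.2 j i⟩⟩⟩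

end RapidlyDecaying

end PartialDerivatives

section LayerTransform

/-- A measure on the depth axis supported in `z ≥ 0` against which rapidly decaying functions are
integrable. The two instances of interest, Lebesgue measure on the half line and the Dirac mass at
`0`, turn `FT` into the half-space transform and the boundary transform. -/
class DepthMeasure (ρ : Measure ℝ) : Prop extends SFinite ρ, ρ.HasTemperateGrowth where
  ae_nonneg : ∀ᵐ z ∂ρ, 0 ≤ z

/-- Lebesgue measure on the depth axis `z ≥ 0`. -/
abbrev halfLine : Measure ℝ := volume.restrict (Ici 0)

instance : DepthMeasure halfLine where
  ae_nonneg := ae_restrict_mem measurableSet_Ici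

instance : DepthMeasure (Measure.dirac 0) where
  ae_nonneg := by simp

/-- Horizontal Lebesgue measure times the depth measure `ρ`. -/
abbrev layer (ρ : Measure ℝ) : Measure (ℝ × ℝ × ℝ) :=
  volume.prod (volume.prod ρ)

/-- The kernel `e^{−ikx−ily−imz}`. -/
def ftKernel (k l : ℝ) (m : ℂ) (p : ℝ × ℝ × ℝ) : ℂ :=
  cexp (-I * (k * p.1 + l * p.2.1) - I * m * p.2.2)

/-- The integrand of the transform `FT` of `f` at time `t`. -/
def ftIntegrand (k l : ℝ) (m : ℂ) (f : ℝ → ℝ → ℝ → ℝ → ℝ) (t : ℝ) (p : ℝ × ℝ × ℝ) : ℂ :=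
  ftKernel k l m p * f p.1 p.2.1 p.2.2 t

/-- The Fourier transform of `f` at time `t`, where the depth variable is integrated
against `ρ`. -/
def FT (ρ : Measure ℝ) (k l : ℝ) (m : ℂ) (f : ℝ → ℝ → ℝ → ℝ → ℝ) (t : ℝ) : ℂ :=
  ∫ p, ftIntegrand k l m f t p ∂layer ρ

/-- The integral defining `FT` converges absolutely. -/
def FTIntegrable (ρ : Measure ℝ) (k l : ℝ) (m : ℂ) (f : ℝ → ℝ → ℝ → ℝ → ℝ) (t : ℝ) : Prop :=
  Integrable (ftIntegrand k l m f t) (layer ρ)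

variable {ρ : Measure ℝ} {k l : ℝ} {m : ℂ} {f g : ℝ → ℝ → ℝ → ℝ → ℝ} {t : ℝ}

theorem ftIntegrand_add : ftIntegrand k l m (f + g) t =
    ftIntegrand k l m f t + ftIntegrand k l m g t := by
  ext p
  simp [ftIntegrand, mul_add]

theorem ftIntegrand_smul (c : ℝ) :
    ftIntegrand k l m (c • f) t = (c : ℂ) • ftIntegrand k l m f t := by
  ext p
  simp [ftIntegrand, mul_left_comm]

theorem FTIntegrable.add (hf : FTIntegrable ρ k l m f t) (hg : FTIntegrable ρ k l m g t) :
    FTIntegrable ρ k l m (f + g) t := by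
  rw [FTIntegrable, ftIntegrand_add]
  exact Integrable.add hf hg

theorem FTIntegrable.smul (hf : FTIntegrable ρ k l m f t) (c : ℝ) :
    FTIntegrable ρ k l m (c • f) t := by
  rw [FTIntegrable, ftIntegrand_smul]
  exact Integrable.smul _ hf

theorem FT_add (hf : FTIntegrable ρ k l m f t) (hg : FTIntegrable ρ k l m g t) :
    FT ρ k l m (f + g) t = FT ρ k l m f t + FT ρ k l m g t := by
  rw [FT, ftIntegrand_add]
  exact integral_add hf hg

theorem FT_smul (c : ℝ) : FT ρ k l m (c • f) t = c * FT ρ k l m f t := by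
  rw [FT, ftIntegrand_smul]
  exact integral_const_mul _ _

theorem FT_smul_add_smul_add {f₁ f₂ f₃ f₄ f₅ : ℝ → ℝ → ℝ → ℝ → ℝ} {a b c : ℝ}
    (h₁ : FTIntegrable ρ k l m f₁ t) (h₂ : FTIntegrable ρ k l m f₂ t)
    (h₃ : FTIntegrable ρ k l m f₃ t) (h₄ : FTIntegrable ρ k l m f₄ t)
    (h₅ : FTIntegrable ρ k l m f₅ t) :
    FT ρ k l m (a • f₁ + b • (f₂ + f₃) + c • (f₄ + f₅)) t =
      a * FT ρ k l m f₁ t + b * (FT ρ k l m f₂ t + FT ρ k l m f₃ t)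
        + c * (FT ρ k l m f₄ t + FT ρ k l m f₅ t) := by
  rw [FT_add ((h₁.smul a).add ((h₂.add h₃).smul b)) ((h₄.add h₅).smul c),
    FT_add (h₁.smul a) ((h₂.add h₃).smul b), FT_smul, FT_smul, FT_smul, FT_add h₂ h₃,
    FT_add h₄ h₅]

theorem FT_halfLine_congr (h : ∀ x y z, 0 < z → f x y z t = g x y z t) :
    FT halfLine k l m f t = FT halfLine k l m g t := by
  have hpos : ∀ᵐ z ∂halfLine, 0 < z := by
    rw [halfLine, ← Measure.restrict_congr_set Ioi_ae_eq_Ici]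
    exact ae_restrict_mem measurableSet_Ioi
  have hpos' : ∀ᵐ p ∂layer halfLine, 0 < p.2.2 :=
    Measure.quasiMeasurePreserving_snd.ae (Measure.quasiMeasurePreserving_snd.ae hpos)
  refine integral_congr_ae (hpos'.mono fun p hp => ?_)
  simp only [ftIntegrand, h _ _ _ hp]

theorem continuous_ftKernel : Continuous (ftKernel k l m) := by
  unfold ftKernel
  fun_prop

theorem norm_ftKernel_le_one (hm : m.im ≤ 0) {p : ℝ × ℝ × ℝ} (hp : 0 ≤ p.2.2) :
    ‖ftKernel k l m p‖ ≤ 1 := by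
  rw [ftKernel, norm_exp, Real.exp_le_one_iff]
  simpa using mul_nonpos_of_nonpos_of_nonneg hm hp

theorem continuous_ftIntegrand (hf : Smooth4 f) : Continuous (ftIntegrand k l m f t) :=
  continuous_ftKernel.mul (continuous_ofReal.comp
    (hf.continuous.comp (f := fun p : ℝ × ℝ × ℝ => (p.1, p.2.1, p.2.2, t)) (by fun_prop)))

theorem ae_layer_nonneg [DepthMeasure ρ] : ∀ᵐ p ∂layer ρ, 0 ≤ p.2.2 :=
  Measure.quasiMeasurePreserving_snd.ae
    (Measure.quasiMeasurePreserving_snd.ae DepthMeasure.ae_nonneg)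

theorem exists_integrable_bound_ftIntegrand [DepthMeasure ρ] (hm : m.im ≤ 0) (hf : Decays f)
    {T : ℝ} (hT : 0 < T) : ∃ b, Integrable b (layer ρ) ∧
      ∀ᵐ p ∂layer ρ, ∀ t ∈ Icc 0 T, ‖ftIntegrand k l m f t p‖ ≤ b p := by
  obtain ⟨C, hC⟩ := hf.exists_norm_le hT (layer ρ).integrablePower
  refine ⟨_, (Measure.integrable_pow_neg_integrablePower (layer ρ)).const_mul C, ?_⟩
  filter_upwards [ae_layer_nonneg] with p hp t ht
  rw [ftIntegrand, norm_mul, norm_real]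
  exact (mul_le_of_le_one_left (norm_nonneg _) (norm_ftKernel_le_one hm hp)).trans (hC t ht p hp)

variable {n : ℕ}

theorem RapidlyDecaying.ftIntegrable [DepthMeasure ρ] (hf : RapidlyDecaying n f)
    (hm : m.im ≤ 0) (ht : 0 ≤ t) : FTIntegrable ρ k l m f t := by
  obtain ⟨b, hb, hfb⟩ := exists_integrable_bound_ftIntegrand (ρ := ρ) (k := k) (l := l) hm
    hf.decays (T := t + 1) (by linarith)
  exact hb.mono' (continuous_ftIntegrand hf.smooth).aestronglyMeasurable
    (hfb.mono fun p hp => hp t ⟨ht, by linarith⟩)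

theorem hasDerivAt_ftIntegrand_x (hf : Smooth4 f) (x y z : ℝ) :
    HasDerivAt (fun r => ftIntegrand k l m f t (r, y, z))
      (ftIntegrand k l m (pd 0 f) t (x, y, z) + -I * k * ftIntegrand k l m f t (x, y, z)) x :=
  hasDerivAt_cexp_mul_ofReal (φ := fun r => -I * (k * r + l * y) - I * m * z)
    (((((hasDerivAt_id x).ofReal_comp.const_mul _).add_const _).const_mul _).sub_const _
      |>.congr_deriv (by simp)) (hf.hasDerivAt_x x y z t)

theorem hasDerivAt_ftIntegrand_y (hf : Smooth4 f) (x y z : ℝ) :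
    HasDerivAt (fun r => ftIntegrand k l m f t (x, r, z))
      (ftIntegrand k l m (pd 1 f) t (x, y, z) + -I * l * ftIntegrand k l m f t (x, y, z)) y :=
  hasDerivAt_cexp_mul_ofReal (φ := fun r => -I * (k * x + l * r) - I * m * z)
    (((((hasDerivAt_id y).ofReal_comp.const_mul _).const_add _).const_mul _).sub_const _
      |>.congr_deriv (by simp)) (hf.hasDerivAt_y x y z t)

theorem hasDerivAt_ftIntegrand_z (hf : Smooth4 f) (x y z : ℝ) :
    HasDerivAt (fun r => ftIntegrand k l m f t (x, y, r))
      (ftIntegrand k l m (pd 2 f) t (x, y, z) + -I * m * ftIntegrand k l m f t (x, y, z)) z :=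
  hasDerivAt_cexp_mul_ofReal (φ := fun r => -I * (k * x + l * y) - I * m * r)
    (((hasDerivAt_id z).ofReal_comp.const_mul _).const_sub _ |>.congr_deriv (by simp))
    (hf.hasDerivAt_z x y z t)

theorem hasDerivAt_ftIntegrand_t (hf : Smooth4 f) (p : ℝ × ℝ × ℝ) :
    HasDerivAt (fun τ => ftIntegrand k l m f τ p) (ftIntegrand k l m (pd 3 f) t p) t :=
  (hf.hasDerivAt_t p.1 p.2.1 p.2.2 t).ofReal_comp.const_mul _

theorem FTIntegrable.integrable_add_mul (hg : FTIntegrable ρ k l m g t)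
    (hf : FTIntegrable ρ k l m f t) (c : ℂ) :
    Integrable (fun p => ftIntegrand k l m g t p + c * ftIntegrand k l m f t p) (layer ρ) :=
  Integrable.add hg (hf.const_mul c)

theorem FTIntegrable.integral_add_mul (hg : FTIntegrable ρ k l m g t)
    (hf : FTIntegrable ρ k l m f t) (c : ℂ) :
    ∫ p, (ftIntegrand k l m g t p + c * ftIntegrand k l m f t p) ∂layer ρ =
      FT ρ k l m g t + c * FT ρ k l m f t := by
  rw [integral_add hg (hf.const_mul c), integral_const_mul, FT, FT]

theorem FT_pd_x [DepthMeasure ρ] (hf : RapidlyDecaying (n + 1) f) (hm : m.im ≤ 0) (ht : 0 ≤ t) :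
    FT ρ k l m (pd 0 f) t = I * k * FT ρ k l m f t := by
  have hf₀ : FTIntegrable ρ k l m f t := hf.ftIntegrable hm ht
  have hf₁ : FTIntegrable ρ k l m (pd 0 f) t := (hf.pd 0).ftIntegrable hm ht
  have h := integral_prod_deriv_fst_eq_zero
    (fun q s => hasDerivAt_ftIntegrand_x hf.smooth s q.1 q.2) hf₀
    (hf₁.integrable_add_mul hf₀ (-I * k))
  linear_combination (hf₁.integral_add_mul hf₀ (-I * k)).symm.trans h

theorem FT_pd_y [DepthMeasure ρ] (hf : RapidlyDecaying (n + 1) f) (hm : m.im ≤ 0) (ht : 0 ≤ t) :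
    FT ρ k l m (pd 1 f) t = I * l * FT ρ k l m f t := by
  have hf₀ : FTIntegrable ρ k l m f t := hf.ftIntegrable hm ht
  have hf₁ : FTIntegrable ρ k l m (pd 1 f) t := (hf.pd 1).ftIntegrable hm ht
  have hF' := hf₁.integrable_add_mul hf₀ (-I * l)
  have h : ∫ p, (ftIntegrand k l m (pd 1 f) t p + -I * l * ftIntegrand k l m f t p) ∂layer ρ
      = 0 := by
    rw [integral_prod _ hF']
    refine integral_eq_zero_of_ae ?_
    filter_upwards [hf₀.prod_right_ae, hF'.prod_right_ae] with x hx hx'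
    exact integral_prod_deriv_fst_eq_zero
      (fun z s => hasDerivAt_ftIntegrand_y hf.smooth x s z) hx hx'
  linear_combination (hf₁.integral_add_mul hf₀ (-I * l)).symm.trans h

theorem FT_pd_z (hf : RapidlyDecaying (n + 1) f) (hm : m.im ≤ 0) (ht : 0 ≤ t) :
    FT halfLine k l m (pd 2 f) t =
      I * m * FT halfLine k l m f t - FT (Measure.dirac 0) k l m f t := by
  have hf₀ : FTIntegrable halfLine k l m f t := hf.ftIntegrable hm ht
  have hf₁ : FTIntegrable halfLine k l m (pd 2 f) t := (hf.pd 2).ftIntegrable hm ht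
  have hf₂ : FTIntegrable (Measure.dirac 0) k l m f t := hf.ftIntegrable hm ht
  have hF' := hf₁.integrable_add_mul hf₀ (-I * m)
  have h : ∫ p, (ftIntegrand k l m (pd 2 f) t p + -I * m * ftIntegrand k l m f t p)
      ∂layer halfLine = -FT (Measure.dirac 0) k l m f t := by
    rw [integral_prod _ hF', FT, integral_prod _ hf₂, ← integral_neg]
    refine integral_congr_ae ?_
    filter_upwards [hf₀.prod_right_ae, hF'.prod_right_ae, hf₂.prod_right_ae] with x hx hx' hx₂
    rw [integral_prod _ hx₂]
    simp only [integral_dirac]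
    exact integral_prod_Ici_deriv_snd
      (fun y s _ => hasDerivAt_ftIntegrand_z hf.smooth x y s) hx hx'
  linear_combination (hf₁.integral_add_mul hf₀ (-I * m)).symm.trans h

theorem hasDerivAt_FT [DepthMeasure ρ] (hf : RapidlyDecaying (n + 1) f) (hm : m.im ≤ 0)
    (ht : 0 < t) : HasDerivAt (FT ρ k l m f) (FT ρ k l m (pd 3 f) t) t := by
  obtain ⟨b, hb, hfb⟩ := exists_integrable_bound_ftIntegrand (ρ := ρ) (k := k) (l := l) hm
    (hf.pd 3).decays (T := t + 1) (by linarith)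
  exact (hasDerivAt_integral_of_dominated_loc_of_deriv_le
    (F := ftIntegrand k l m f) (F' := ftIntegrand k l m (pd 3 f)) (Ioo_mem_nhds ht (lt_add_one t))
    (.of_forall fun _ => (continuous_ftIntegrand hf.smooth).aestronglyMeasurable)
    (hf.ftIntegrable hm ht.le)
    (continuous_ftIntegrand (hf.pd 3).smooth).aestronglyMeasurable
    (hfb.mono fun p hp τ hτ => hp τ (Ioo_subset_Icc_self hτ)) hb
    (.of_forall fun p τ _ => hasDerivAt_ftIntegrand_t hf.smooth p)).2

theorem FT3_eq_FT (hf : FTIntegrable halfLine k l m f t) :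
    FT3 f k l m t = FT halfLine k l m f t := by
  rw [FT, integral_prod _ hf]
  refine integral_congr_ae (hf.prod_right_ae.mono fun x hx => ?_)
  exact (integral_prod _ hx).symm

theorem FT2_eq_FT {h : ℝ → ℝ → ℝ → ℝ} (hf : FTIntegrable (Measure.dirac 0) k l m f t)
    (hfh : ∀ x y, f x y 0 t = h x y t) : FT2 h k l t = FT (Measure.dirac 0) k l m f t := by
  rw [FT, integral_prod _ hf]
  refine integral_congr_ae (hf.prod_right_ae.mono fun x hx => ?_)
  dsimp only
  rw [integral_prod _ hx]
  simp only [integral_dirac, ftIntegrand, ftKernel, hfh, ofReal_zero, mul_zero, sub_zero]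

end LayerTransform

section ShearOde

variable {lam mu : ℝ} {u v w : ℝ → ℝ → ℝ → ℝ → ℝ} {g : ℝ → ℝ → ℝ → ℝ} {k l : ℝ} {m : ℂ} {t : ℝ}
  {n : ℕ}

theorem FT2_trace_eq_FT (hu : RapidlyDecaying n u) (hm : m.im ≤ 0) (ht : 0 ≤ t) :
    FT2 (fun x y τ => u x y 0 τ) k l t = FT (Measure.dirac 0) k l m u t :=
  FT2_eq_FT (hu.ftIntegrable hm ht) fun _ _ => rfl

theorem hasDerivAt_FT3 (hu : RapidlyDecaying (n + 1) u) (hm : m.im ≤ 0) (ht : 0 < t) :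
    HasDerivAt (FT3 u k l m) (FT3 (pd 3 u) k l m t) t := by
  rw [FT3_eq_FT ((hu.pd 3).ftIntegrable hm ht.le)]
  exact (hasDerivAt_FT hu hm ht).congr_of_eventuallyEq
    ((eventually_gt_nhds ht).mono fun τ hτ => FT3_eq_FT (hu.ftIntegrable hm hτ.le))

theorem FT3_momentum_x (hu : RapidlyDecaying 2 u) (hv : RapidlyDecaying 2 v)
    (hw : RapidlyDecaying 2 w) (hm : m.im ≤ 0) (ht : 0 < t)
    (hpde : ∀ x y z, 0 < z →
      (lam + 2 * mu) * pd 0 (pd 0 u) x y z t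
        + (lam + mu) * (pd 0 (pd 1 v) x y z t + pd 0 (pd 2 w) x y z t)
        + mu * (pd 1 (pd 1 u) x y z t + pd 2 (pd 2 u) x y z t) = pd 3 (pd 3 u) x y z t)
    (hbc : ∀ x y, pd 2 u x y 0 t + pd 0 w x y 0 t = g x y t) :
    FT3 (pd 3 (pd 3 u)) k l m t =
      -((lam + 2 * mu) * k ^ 2 + mu * (l ^ 2 + m ^ 2)) * FT3 u k l m t
        - (lam + mu) * k * (l * FT3 v k l m t + m * FT3 w k l m t)
        - I * lam * k * FT2 (fun x y τ => w x y 0 τ) k l t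
        - mu * (I * m * FT2 (fun x y τ => u x y 0 τ) k l t + FT2 g k l t) := by
  have h₀ := ht.le
  have hint {f : ℝ → ℝ → ℝ → ℝ → ℝ} (hf : RapidlyDecaying 2 f) (i j : Fin 4) :
      FTIntegrable halfLine k l m (pd i (pd j f)) t := ((hf.pd j).pd i).ftIntegrable hm h₀
  have hpde' := FT_halfLine_congr (k := k) (l := l) (m := m) (f := (lam + 2 * mu) • pd 0 (pd 0 u)
    + (lam + mu) • (pd 0 (pd 1 v) + pd 0 (pd 2 w)) + mu • (pd 1 (pd 1 u) + pd 2 (pd 2 u))) hpde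
  have hu₂ : FTIntegrable (Measure.dirac 0) k l m (pd 2 u) t := (hu.pd 2).ftIntegrable hm h₀
  have hw₀ : FTIntegrable (Measure.dirac 0) k l m (pd 0 w) t := (hw.pd 0).ftIntegrable hm h₀
  have hbc' := FT2_eq_FT (hu₂.add hw₀) hbc
  rw [FT_smul_add_smul_add (hint hu 0 0) (hint hv 0 1) (hint hw 0 2) (hint hu 1 1) (hint hu 2 2),
    FT_pd_x (hu.pd 0) hm h₀, FT_pd_x hu hm h₀, FT_pd_x (hv.pd 1) hm h₀, FT_pd_y hv hm h₀,
    FT_pd_x (hw.pd 2) hm h₀, FT_pd_z hw hm h₀, FT_pd_y (hu.pd 1) hm h₀, FT_pd_y hu hm h₀,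
    FT_pd_z (hu.pd 2) hm h₀, FT_pd_z hu hm h₀] at hpde'
  rw [FT_add hu₂ hw₀, FT_pd_x hw hm h₀] at hbc'
  rw [hbc', FT3_eq_FT (hint hu 3 3), ← hpde', FT3_eq_FT (hu.ftIntegrable hm h₀),
    FT3_eq_FT (hv.ftIntegrable hm h₀), FT3_eq_FT (hw.ftIntegrable hm h₀),
    FT2_trace_eq_FT hu hm h₀, FT2_trace_eq_FT hw hm h₀]
  push_cast
  linear_combination (((lam + 2 * mu) * k ^ 2 + mu * (l ^ 2 + m ^ 2)) * FT halfLine k l m u t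
    + (lam + mu) * k * (l * FT halfLine k l m v t + m * FT halfLine k l m w t)) * I_sq

theorem FT3_momentum_z (hlm : lam + 2 * mu ≠ 0) (hu : RapidlyDecaying 2 u)
    (hv : RapidlyDecaying 2 v) (hw : RapidlyDecaying 2 w) (hm : m.im ≤ 0) (ht : 0 < t)
    (hpde : ∀ x y z, 0 < z →
      (lam + 2 * mu) * pd 2 (pd 2 w) x y z t
        + (lam + mu) * (pd 2 (pd 0 u) x y z t + pd 2 (pd 1 v) x y z t)
        + mu * (pd 0 (pd 0 w) x y z t + pd 1 (pd 1 w) x y z t) = pd 3 (pd 3 w) x y z t)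
    (hbc : ∀ x y, pd 2 w x y 0 t
      + lam / (lam + 2 * mu) * (pd 0 u x y 0 t + pd 1 v x y 0 t) = g x y t) :
    FT3 (pd 3 (pd 3 w)) k l m t =
      -((lam + 2 * mu) * m ^ 2 + mu * (k ^ 2 + l ^ 2)) * FT3 w k l m t
        - (lam + mu) * m * (k * FT3 u k l m t + l * FT3 v k l m t)
        - (lam + 2 * mu) * (I * m * FT2 (fun x y τ => w x y 0 τ) k l t + FT2 g k l t)
        - I * mu * (k * FT2 (fun x y τ => u x y 0 τ) k l t
          + l * FT2 (fun x y τ => v x y 0 τ) k l t) := by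
  have h₀ := ht.le
  have hint {f : ℝ → ℝ → ℝ → ℝ → ℝ} (hf : RapidlyDecaying 2 f) (i j : Fin 4) :
      FTIntegrable halfLine k l m (pd i (pd j f)) t := ((hf.pd j).pd i).ftIntegrable hm h₀
  have htrace {f : ℝ → ℝ → ℝ → ℝ → ℝ} (hf : RapidlyDecaying 2 f) (i : Fin 4) :
      FTIntegrable (Measure.dirac 0) k l m (pd i f) t := (hf.pd i).ftIntegrable hm h₀
  have hpde' := FT_halfLine_congr (k := k) (l := l) (m := m) (f := (lam + 2 * mu) • pd 2 (pd 2 w)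
    + (lam + mu) • (pd 2 (pd 0 u) + pd 2 (pd 1 v)) + mu • (pd 0 (pd 0 w) + pd 1 (pd 1 w))) hpde
  have hdiv := ((htrace hu 0).add (htrace hv 1)).smul (lam / (lam + 2 * mu))
  have hbc' := FT2_eq_FT ((htrace hw 2).add hdiv) hbc
  rw [FT_smul_add_smul_add (hint hw 2 2) (hint hu 2 0) (hint hv 2 1) (hint hw 0 0) (hint hw 1 1),
    FT_pd_z (hw.pd 2) hm h₀, FT_pd_z hw hm h₀, FT_pd_z (hu.pd 0) hm h₀, FT_pd_x hu hm h₀,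
    FT_pd_x hu hm h₀, FT_pd_z (hv.pd 1) hm h₀, FT_pd_y hv hm h₀, FT_pd_y hv hm h₀,
    FT_pd_x (hw.pd 0) hm h₀, FT_pd_x hw hm h₀, FT_pd_y (hw.pd 1) hm h₀, FT_pd_y hw hm h₀] at hpde'
  rw [FT_add (htrace hw 2) hdiv, FT_smul, FT_add (htrace hu 0) (htrace hv 1), FT_pd_x hu hm h₀,
    FT_pd_y hv hm h₀] at hbc'
  rw [hbc', FT3_eq_FT (hint hw 3 3), ← hpde', FT3_eq_FT (hu.ftIntegrable hm h₀),
    FT3_eq_FT (hv.ftIntegrable hm h₀), FT3_eq_FT (hw.ftIntegrable hm h₀),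
    FT2_trace_eq_FT hu hm h₀, FT2_trace_eq_FT hv hm h₀, FT2_trace_eq_FT hw hm h₀]
  have hlm' : (lam + 2 * mu : ℂ) ≠ 0 := mod_cast hlm
  push_cast
  field_simp
  linear_combination (((lam + 2 * mu) * m ^ 2 + mu * (k ^ 2 + l ^ 2)) * FT halfLine k l m w t
    + (lam + mu) * m * (k * FT halfLine k l m u t + l * FT halfLine k l m v t)) * I_sq

theorem global_ODE_R_general {g₁ g₂ g₃ : ℝ → ℝ → ℝ → ℝ} (hlm : lam + 2 * mu ≠ 0)
    (hu : RapidlyDecaying 2 u) (hv : RapidlyDecaying 2 v) (hw : RapidlyDecaying 2 w)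
    (hx : ∀ x y z t, 0 < z → 0 < t →
      (lam + 2 * mu) * pd 0 (pd 0 u) x y z t
        + (lam + mu) * (pd 0 (pd 1 v) x y z t + pd 0 (pd 2 w) x y z t)
        + mu * (pd 1 (pd 1 u) x y z t + pd 2 (pd 2 u) x y z t) = pd 3 (pd 3 u) x y z t)
    (hz : ∀ x y z t, 0 < z → 0 < t →
      (lam + 2 * mu) * pd 2 (pd 2 w) x y z t
        + (lam + mu) * (pd 2 (pd 0 u) x y z t + pd 2 (pd 1 v) x y z t)
        + mu * (pd 0 (pd 0 w) x y z t + pd 1 (pd 1 w) x y z t) = pd 3 (pd 3 w) x y z t)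
    (hbc₁ : ∀ x y t, 0 < t → pd 2 u x y 0 t + pd 0 w x y 0 t = g₁ x y t)
    (hbc₃ : ∀ x y t, 0 < t → pd 2 w x y 0 t
      + lam / (lam + 2 * mu) * (pd 0 u x y 0 t + pd 1 v x y 0 t) = g₃ x y t)
    (hm : m.im ≤ 0) (ht : 0 < t) :
    DifferentiableAt ℝ (fun τ => k * FT3 w k l m τ - m * FT3 u k l m τ) t ∧
      HasDerivAt (deriv fun τ => k * FT3 w k l m τ - m * FT3 u k l m τ)
        (FR lam mu u v w g₁ g₂ g₃ k l m t
          - mu * (k ^ 2 + l ^ 2 + m ^ 2) * (k * FT3 w k l m t - m * FT3 u k l m t)) t := by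
  have hR {n : ℕ} {a b : ℝ → ℝ → ℝ → ℝ → ℝ} (ha : RapidlyDecaying (n + 1) a)
      (hb : RapidlyDecaying (n + 1) b) {τ : ℝ} (hτ : 0 < τ) :
      HasDerivAt (fun τ => k * FT3 b k l m τ - m * FT3 a k l m τ)
        (k * FT3 (pd 3 b) k l m τ - m * FT3 (pd 3 a) k l m τ) τ :=
    ((hasDerivAt_FT3 hb hm hτ).const_mul _).sub ((hasDerivAt_FT3 ha hm hτ).const_mul _)
  refine ⟨(hR hu hw ht).differentiableAt, ?_⟩
  refine (hasDerivAt_deriv_of_eventually ((eventually_gt_nhds ht).mono fun τ hτ => hR hu hw hτ)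
    (hR (hu.pd 3) (hw.pd 3) ht)).congr_deriv ?_
  rw [FT3_momentum_x hu hv hw hm ht (fun x y z h => hx x y z t h ht) (fun x y => hbc₁ x y t ht),
    FT3_momentum_z hlm hu hv hw hm ht (fun x y z h => hz x y z t h ht)
      (fun x y => hbc₃ x y t ht), FR]
  ring

end ShearOde

/-- under the Lamé–Navier equations, decay, and the stress boundary conditions,
the combination `R = kŵ − mû` of the half-space Fourier transforms satisfies the ODE
`∂²ₜR + μ(k²+l²+m²)R = F_R` for all `k, l ∈ ℝ`, `Im m ≤ 0`, `t > 0`. -/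
theorem global_ODE_R (lam mu : ℝ) (hmu : 0 < mu) (hl : 0 < lam + 2 * mu)
    (u v w : ℝ → ℝ → ℝ → ℝ → ℝ) (g₁ g₂ g₃ : ℝ → ℝ → ℝ → ℝ)
    (hsu : Smooth4 u) (hsv : Smooth4 v) (hsw : Smooth4 w)
    (hpde : LameNavier lam mu u v w)
    (hdu : DecaysAll u) (hdv : DecaysAll v) (hdw : DecaysAll w)
    (hg₁ : Continuous fun p : ℝ × ℝ × ℝ => g₁ p.1 p.2.1 p.2.2)
    (hg₂ : Continuous fun p : ℝ × ℝ × ℝ => g₂ p.1 p.2.1 p.2.2)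
    (hg₃ : Continuous fun p : ℝ × ℝ × ℝ => g₃ p.1 p.2.1 p.2.2)
    (hbc : StressBC lam mu u v w g₁ g₂ g₃) :
    ∀ (k l : ℝ) (m : ℂ), m.im ≤ 0 → ∀ t : ℝ, 0 < t →
      deriv (deriv (fun τ : ℝ => (k : ℂ) * FT3 w k l m τ - m * FT3 u k l m τ)) t
        + (mu : ℂ) * ((k : ℂ) ^ 2 + (l : ℂ) ^ 2 + m ^ 2) *
            ((k : ℂ) * FT3 w k l m t - m * FT3 u k l m t)
        = FR lam mu u v w g₁ g₂ g₃ k l m t := by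
  intro k l m hm t ht
  rw [(global_ODE_R_general (g₂ := g₂) hl.ne' (.of_decaysAll hsu hdu) (.of_decaysAll hsv hdv)
    (.of_decaysAll hsw hdw) (fun x y z t hz ht => (hpde x y z t hz ht).1)
    (fun x y z t hz ht => (hpde x y z t hz ht).2.2) (fun x y t ht => (hbc x y t ht).1)
    (fun x y t ht => (hbc x y t ht).2.2) hm ht).2.deriv, sub_add_cancel]
end
end
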